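/- arXiv:0906.3836 — 3 statements merged into one kernel-verified Lean document; each statement's English description precedes it below -/
import Mathlib

section
/- Let S denote the sum over all 64 triples (ε,j,δ) with ε ∈ {-1,1}^3, j ∈ {1,2,3,4}, δ ∈ {-1,1} of e_2(D(ε,j,δ))·e_1(D(ε,j,δ))^6 / π(D(ε,j,δ)). Then S = 13056·(a_1+a_2+a_3 − b_1−b_2−b_3 − 2c). (This identity computes 12·F_{Td^2}, and also 24·F_{Td^3}, of the Nill–Paffenholz toric Fano 7-fold by the localization formula; in particular this obstruction to asymptotic Chow semistability does not vanish identically.) -/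
/-!
The sum is evaluated one index at a time, each step cancelling the denominators attached to that
index.

* Over `δ`: with `s`, `q`, `p` the sum, second elementary symmetric polynomial and product of the
  six other entries, and `w` the last one, the two terms add up to `fiberSum s q w / p`, where
  `fiberSum` is a polynomial (`delta_sum`).
* Over `ε`: put `x_i = ε_i a_i`; then the last entry is `w + (x_1 + x_2 + x_3) / 2` with
  `w = c + 2 b_j - (a_1 + a_2 + a_3) / 2` independent of `ε`. The alternating sum over signs keeps
  only the part of `fiberSum` that is odd in every `x_i`, so it is divisible by `a_1 a_2 a_3`; the
  quotient is the quartic `signSum` (`eps_sum`).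
* Over `j`: the sum and second elementary symmetric polynomial of the differences `b_k - b_j` are
  `B - 4 b_j` and `E - 3 b_j B + 6 b_j ^ 2`, with `B` and `E` the first two elementary symmetric
  polynomials of the `b_k`. Hence `signSum` becomes a polynomial of degree 4 in `b_j` whose
  coefficients do not depend on `j`, and `∑_j b_j ^ m / ∏_{k ≠ j} (b_k - b_j)` is `0, 0, 0, -1, -B`
  for `m = 0, …, 4` (`lagrange_sum`). Only the coefficients of `b_j ^ 3` and `b_j ^ 4` survive.
-/

open Finset

noncomputable section

/-- Sign of a Boolean: `true ↦ 1`, `false ↦ -1`, encoding `{-1,1}`. -/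
def sgn (b : Bool) : ℝ := if b then 1 else -1

/-- The eigenvalue 7-tuple `D(ε,j,δ)` (as a multiset) of the generic torus-induced
holomorphic vector field at the fixed point indexed by `(ε,j,δ)` on the
Nill–Paffenholz toric Fano 7-fold.  Here `a : Fin 3 → ℝ`, `b : Fin 4 → ℝ` (with `b 3 = 0`). -/
def tup (a : Fin 3 → ℝ) (b : Fin 4 → ℝ) (c : ℝ) (ε : Fin 3 → Bool) (j : Fin 4) (δ : Bool) :
    Multiset ℝ :=
  ({sgn (ε 0) * a 0, sgn (ε 1) * a 1, sgn (ε 2) * a 2} : Multiset ℝ)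
    + (Finset.univ.erase j).val.map (fun k => b k - b j)
    + {sgn δ * (c - (∑ i ∈ Finset.univ.filter (fun i => ε i = false), a i) + 2 * b j)}

/-- The `k`-th elementary symmetric polynomial of the entries of a multiset. -/
def esym (k : ℕ) (D : Multiset ℝ) : ℝ := ((D.powersetCard k).map Multiset.prod).sum

lemma esym_one (D : Multiset ℝ) : esym 1 D = D.sum := by
  simp [esym, Multiset.powersetCard_one, Multiset.map_map]

lemma esym_two_cons (x : ℝ) (D : Multiset ℝ) :
    esym 2 (x ::ₘ D) = esym 2 D + x * D.sum := by
  rw [← esym_one]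
  simp [esym, Multiset.powersetCard_cons, Multiset.map_map, Multiset.sum_map_mul_left]

lemma esym_two_zero : esym 2 0 = 0 := by
  simp [esym, Multiset.powersetCard_zero_right]

/-- The contribution of a fixed point whose eigenvalue tuple is `D`. -/
def contrib (D : Multiset ℝ) : ℝ := esym 2 D * esym 1 D ^ 6 / D.prod

lemma contrib_seven (x y z u v t w : ℝ) :
    contrib (({x, y, z} : Multiset ℝ) + {u, v, t} + {w}) =
      ((x * y + x * z + y * z + (x + y + z) * (u + v + t) + (u * v + u * t + v * t))
          + (x + y + z + (u + v + t)) * w)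
        * (x + y + z + (u + v + t) + w) ^ 6 / (x * y * z * (u * v * t) * w) := by
  have h : ({x, y, z} : Multiset ℝ) + {u, v, t} + {w} =
      x ::ₘ y ::ₘ z ::ₘ u ::ₘ v ::ₘ t ::ₘ w ::ₘ 0 := by
    simp [Multiset.insert_eq_cons, ← Multiset.singleton_add, add_assoc]
  rw [h, contrib, esym_one]
  simp only [esym_two_cons, esym_two_zero, Multiset.sum_cons, Multiset.sum_zero,
    Multiset.prod_cons, Multiset.prod_zero]
  congr 1
  · congr 1
    · ring
    · congr 1
      ring
  · ring

/-- The polynomial `((q + s w) (s + w) ^ 6 - (q - s w) (s - w) ^ 6) / w`. -/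
def fiberSum (s q w : ℝ) : ℝ :=
  2 * (q * (6 * s ^ 5 + 20 * s ^ 3 * w ^ 2 + 6 * s * w ^ 4)
    + s * (s ^ 6 + 15 * s ^ 4 * w ^ 2 + 15 * s ^ 2 * w ^ 4 + w ^ 6))

lemma delta_sum (s q p w : ℝ) (hw : w ≠ 0) :
    (q + s * w) * (s + w) ^ 6 / (p * w) + (q + s * (-w)) * (s + -w) ^ 6 / (p * (-w)) =
      fiberSum s q w / p := by
  rcases eq_or_ne p 0 with rfl | hp
  · simp
  · unfold fiberSum
    field_simp
    ring

/-- `fiberSum` as a function of `x_i = ε_i a_i`, where `w` is the part of the last entry that is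
independent of the signs, and `s`, `t` are the first two elementary symmetric polynomials of the
three differences `b_k - b_j`. -/
def signed (s t w x y z : ℝ) : ℝ :=
  fiberSum (x + y + z + s) (x * y + x * z + y * z + (x + y + z) * s + t) (w + (x + y + z) / 2)

/-- The quotient by `x y z` of the alternating sum of `signed s t w (± x) (± y) (± z)`. -/
def signSum (s t w x y z : ℝ) : ℝ :=
  12840 * s ^ 4 + 21840 * s ^ 3 * w + 30384 * s ^ 2 * w ^ 2 + 10608 * s * w ^ 3 + 2088 * w ^ 4
    + t * (7200 * s ^ 2 + 6048 * s * w + 2784 * w ^ 2)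
    + (x ^ 2 + y ^ 2 + z ^ 2) * (42540 * s ^ 2 + 45676 * s * w + 15548 * w ^ 2 + 3640 * t)
    + 21875 * (x ^ 2 * y ^ 2 + x ^ 2 * z ^ 2 + y ^ 2 * z ^ 2)
    + 11669 / 2 * (x ^ 4 + y ^ 4 + z ^ 4)

lemma alternating_signed (s t w x y z : ℝ) :
    signed s t w x y z - signed s t w x y (-z) - signed s t w x (-y) z + signed s t w x (-y) (-z)
      - signed s t w (-x) y z + signed s t w (-x) y (-z) + signed s t w (-x) (-y) z
      - signed s t w (-x) (-y) (-z) = x * y * z * signSum s t w x y z := by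
  unfold signed fiberSum signSum
  ring

lemma sum_signs (f : (Fin 3 → Bool) → ℝ) :
    ∑ ε, f ε = ∑ p : Bool, ∑ q : Bool, ∑ r : Bool, f ![p, q, r] := by
  let e : (Fin 3 → Bool) ≃ Bool × Bool × Bool :=
    { toFun := fun ε => (ε 0, ε 1, ε 2)
      invFun := fun p => ![p.1, p.2.1, p.2.2]
      left_inv := fun ε => by ext i; fin_cases i <;> rfl
      right_inv := fun p => rfl }
  rw [← e.symm.sum_comp f, Fintype.sum_prod_type]
  simp only [Fintype.sum_prod_type]
  rfl

/-- The sum over the sixteen fixed points lying over the `j`-th fixed point of the `b`-factor;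
`k`, `l`, `m` are the other three indices. -/
lemma eps_sum (a : Fin 3 → ℝ) (b : Fin 4 → ℝ) (c : ℝ) (j k l m : Fin 4)
    (hj : (Finset.univ.erase j).val = {k, l, m})
    (hgen : ∀ (ε : Fin 3 → Bool) (δ : Bool), ∀ x ∈ tup a b c ε j δ, x ≠ 0) :
    ∑ ε : Fin 3 → Bool, ∑ δ : Bool, contrib (tup a b c ε j δ) =
      signSum ((b k - b j) + (b l - b j) + (b m - b j))
        ((b k - b j) * (b l - b j) + (b k - b j) * (b m - b j) + (b l - b j) * (b m - b j))
        (c + 2 * b j - (a 0 + a 1 + a 2) / 2) (a 0) (a 1) (a 2)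
        / ((b k - b j) * (b l - b j) * (b m - b j)) := by
  -- The last entry is `c + 2 b_j - (a_1 + a_2 + a_3) / 2 + (x_1 + x_2 + x_3) / 2`.
  have hlast : ∀ p q r : Bool,
      c - (∑ i ∈ Finset.univ.filter (fun i => ![p, q, r] i = false), a i) + 2 * b j =
        (c + 2 * b j - (a 0 + a 1 + a 2) / 2)
          + (sgn p * a 0 + sgn q * a 1 + sgn r * a 2) / 2 := by
    intro p q r
    rw [Finset.sum_filter, Fin.sum_univ_three]
    cases p <;> cases q <;> cases r <;> simp [sgn] <;> ring
  have hfib : ∀ p q r : Bool, ∑ δ : Bool, contrib (tup a b c ![p, q, r] j δ) =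
      signed ((b k - b j) + (b l - b j) + (b m - b j))
        ((b k - b j) * (b l - b j) + (b k - b j) * (b m - b j) + (b l - b j) * (b m - b j))
        (c + 2 * b j - (a 0 + a 1 + a 2) / 2) (sgn p * a 0) (sgn q * a 1) (sgn r * a 2)
        / ((sgn p * a 0) * (sgn q * a 1) * (sgn r * a 2)
          * ((b k - b j) * (b l - b j) * (b m - b j))) := by
    intro p q r
    have hw : (c + 2 * b j - (a 0 + a 1 + a 2) / 2)
          + (sgn p * a 0 + sgn q * a 1 + sgn r * a 2) / 2 ≠ 0 := by
      rw [← hlast]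
      apply hgen ![p, q, r] true
      simp [tup, sgn]
    have ht : ∀ δ, tup a b c ![p, q, r] j δ =
        ({sgn p * a 0, sgn q * a 1, sgn r * a 2} : Multiset ℝ)
          + {b k - b j, b l - b j, b m - b j}
          + {sgn δ * ((c + 2 * b j - (a 0 + a 1 + a 2) / 2)
            + (sgn p * a 0 + sgn q * a 1 + sgn r * a 2) / 2)} := by
      intro δ
      rw [← hlast, tup, hj]
      simp
    simp only [ht, contrib_seven, Fintype.sum_bool]
    rw [signed, ← delta_sum _ _ _ _ hw]
    simp [sgn]
  have ha : ∀ i, a i ≠ 0 := by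
    have h := hgen (fun _ => true) true
    intro i
    fin_cases i <;> exact h _ (by simp [tup, sgn])
  have h0 := ha 0
  have h1 := ha 1
  have h2 := ha 2
  have key : ∀ s t w d : ℝ,
      ∑ p : Bool, ∑ q : Bool, ∑ r : Bool,
        signed s t w (sgn p * a 0) (sgn q * a 1) (sgn r * a 2)
          / ((sgn p * a 0) * (sgn q * a 1) * (sgn r * a 2) * d) =
      signSum s t w (a 0) (a 1) (a 2) / d := by
    intro s t w d
    have hs : signSum s t w (a 0) (a 1) (a 2) / d =
        (a 0 * a 1 * a 2 * signSum s t w (a 0) (a 1) (a 2)) / (a 0 * a 1 * a 2 * d) := by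
      rw [mul_div_mul_left _ _ (by positivity)]
    rw [hs, ← alternating_signed]
    simp only [Fintype.sum_bool, sgn, if_true, Bool.false_eq_true, if_false, one_mul, neg_mul,
      mul_neg, neg_neg, div_neg]
    ring
  rw [sum_signs]
  simp only [hfib]
  exact key _ _ _ _

/-- The sum over `j` of a quartic in `b_j`, divided by `∏_{k ≠ j} (b_k - b_j)`, in the case that
the last node is `0`. -/
lemma lagrange_sum (x y z h0 h1 h2 h3 h4 : ℝ) (hx : x ≠ 0) (hy : y ≠ 0) (hz : z ≠ 0)
    (hxy : x - y ≠ 0) (hxz : x - z ≠ 0) (hyz : y - z ≠ 0) :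
    (h0 + h1 * x + h2 * x ^ 2 + h3 * x ^ 3 + h4 * x ^ 4) / ((y - x) * (z - x) * (0 - x))
      + (h0 + h1 * y + h2 * y ^ 2 + h3 * y ^ 3 + h4 * y ^ 4) / ((x - y) * (z - y) * (0 - y))
      + (h0 + h1 * z + h2 * z ^ 2 + h3 * z ^ 3 + h4 * z ^ 4) / ((x - z) * (y - z) * (0 - z))
      + h0 / ((x - 0) * (y - 0) * (z - 0)) = -h3 - h4 * (x + y + z) := by
  rw [show (y - x) * (z - x) * (0 - x) = -((x - y) * (x - z) * x) by ring,
    show (x - y) * (z - y) * (0 - y) = (x - y) * (y - z) * y by ring,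
    show (x - z) * (y - z) * (0 - z) = -((x - z) * (y - z) * z) by ring]
  simp only [sub_zero, div_neg]
  field_simp
  ring

/-- At `s = B - 4 T` and `t = E - 3 T B + 6 T ^ 2`, the quartic `signSum` expanded in powers of the
node `T`. The coefficients of `T ^ 0`, `T ^ 1`, `T ^ 2` do not contribute to the final sum. -/
lemma signSum_expand (B E w x y z : ℝ) : ∃ h0 h1 h2 : ℝ, ∀ s t T : ℝ, s = B - 4 * T →
    t = E - 3 * T * B + 6 * T ^ 2 →
    signSum s t (w + 2 * T) x y z =
      h0 + h1 * T + h2 * T ^ 2 + (26112 * w - 2584704 * B) * T ^ 3 + 2597760 * T ^ 4 := by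
  refine ⟨signSum B E w x y z,
    -45504 * B * E - 187776 * B * w ^ 2 - 158688 * B ^ 2 * w - 183360 * B ^ 3 - 13056 * E * w
      - 25728 * w ^ 3 - (x ^ 2 + y ^ 2 + z ^ 2) * (259888 * B + 120512 * w),
    278784 * B * w + 1009728 * B ^ 2 + 77952 * E + 298368 * w ^ 2
      + 399264 * (x ^ 2 + y ^ 2 + z ^ 2), ?_⟩
  rintro s t T rfl rfl
  unfold signSum
  ring

theorem futaki_Td2 (a : Fin 3 → ℝ) (b : Fin 4 → ℝ) (c : ℝ)
    (hb4 : b 3 = 0)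
    (hgen : ∀ (ε : Fin 3 → Bool) (j : Fin 4) (δ : Bool),
      ∀ x ∈ tup a b c ε j δ, x ≠ 0) :
    ∑ ε : Fin 3 → Bool, ∑ j : Fin 4, ∑ δ : Bool,
      (let E : ℕ → ℝ := fun k => esym k (tup a b c ε j δ);
       (E 2 * E 1 ^ 6) / (tup a b c ε j δ).prod)
    = 13056 * (a 0 + a 1 + a 2 - b 0 - b 1 - b 2 - 2 * c) := by
  have hdiff : ∀ j k : Fin 4, k ≠ j → b k - b j ≠ 0 := by
    intro j k hk
    apply hgen (fun _ => true) j true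
    simp only [tup, Multiset.mem_add]
    refine Or.inl (Or.inr (Multiset.mem_map.2 ⟨k, ?_, rfl⟩))
    exact Finset.mem_erase.2 ⟨hk, Finset.mem_univ k⟩
  have h03 := hdiff 3 0 (by decide)
  have h13 := hdiff 3 1 (by decide)
  have h23 := hdiff 3 2 (by decide)
  have h01 := hdiff 1 0 (by decide)
  have h02 := hdiff 2 0 (by decide)
  have h12 := hdiff 2 1 (by decide)
  rw [hb4, sub_zero] at h03 h13 h23
  change ∑ ε : Fin 3 → Bool, ∑ j : Fin 4, ∑ δ : Bool, contrib (tup a b c ε j δ) = _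
  rw [Finset.sum_comm, Fin.sum_univ_four,
    eps_sum a b c 0 1 2 3 (by decide) fun ε δ => hgen ε 0 δ,
    eps_sum a b c 1 0 2 3 (by decide) fun ε δ => hgen ε 1 δ,
    eps_sum a b c 2 0 1 3 (by decide) fun ε δ => hgen ε 2 δ,
    eps_sum a b c 3 0 1 2 (by decide) fun ε δ => hgen ε 3 δ, hb4]
  obtain ⟨g0, g1, g2, hg⟩ := signSum_expand (b 0 + b 1 + b 2)
    (b 0 * b 1 + b 0 * b 2 + b 1 * b 2) (c - (a 0 + a 1 + a 2) / 2) (a 0) (a 1) (a 2)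
  have hw : ∀ T, c + 2 * T - (a 0 + a 1 + a 2) / 2 = c - (a 0 + a 1 + a 2) / 2 + 2 * T :=
    fun T => by ring
  simp only [hw]
  rw [hg _ _ (b 0) (by ring) (by ring), hg _ _ (b 1) (by ring) (by ring),
    hg _ _ (b 2) (by ring) (by ring), hg _ _ 0 (by ring) (by ring)]
  have hL := lagrange_sum (b 0) (b 1) (b 2) g0 g1 g2
    (26112 * (c - (a 0 + a 1 + a 2) / 2) - 2584704 * (b 0 + b 1 + b 2)) 2597760
    h03 h13 h23 h01 h02 h12
  have h0 : ∀ A B : ℝ, g0 + g1 * 0 + g2 * 0 ^ 2 + A * 0 ^ 3 + B * 0 ^ 4 = g0 :=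
    fun A B => by ring
  rw [h0, hL]
  ring
end
end

section
/- Let S denote the sum over all 64 triples (ε,j,δ) with ε ∈ {-1,1}^3, j ∈ {1,2,3,4}, δ ∈ {-1,1} of (−e_1^3·e_2 + 3·e_1·e_2^2 + e_1^2·e_3 − e_1·e_4)·e_1^3 / π, where all e_k and π are evaluated at D(ε,j,δ). Then S = 28800·(a_1+a_2+a_3 − b_1−b_2−b_3 − 2c). (This identity computes 1440·F_{Td^5} of the Nill–Paffenholz toric Fano 7-fold by the localization formula.) -/
/-!
The 64 fixed points are summed fibrewise. For fixed `j`, write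
`z = c + 2 b_j - (a_1 + a_2 + a_3) / 2`; the tuple at `(ε, j, δ)` then consists of the `ε_i a_i`, the
differences `b_k - b_j`, and `δ (z + ∑ ε_i a_i / 2)`. Summing over `δ` and then over each `ε_i` amounts to
taking the odd part of the numerator in one variable and dividing by that variable, so each of
these four sums removes one factor from the denominator (`sum_W`, `sum_A`, `sum_AA`, `sum_AAA`).
The numerator has degree 8, so what remains is a polynomial of degree 4 over
`∏_{k ≠ j} (b_k - b_j)` (`sum_fiber`).

As a function of `x = b_j` this polynomial is a quartic whose coefficients do not depend on `j`
(`pushAAA_eq`). By Lagrange interpolation (`sum_base`) only its coefficients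
`57600 m - 1741056 s1` of `x ^ 3` and `1769856` of `x ^ 4` contribute to the sum over `j`, where
`m = c - (a_1 + a_2 + a_3) / 2` and `s1 = ∑ b_j`; the total is
`-57600 m - 28800 s1`, which is the claim.
-/

open Finset

noncomputable section

lemma esym_zero (D : Multiset ℝ) : esym 0 D = 1 := by simp [esym]

lemma esym_cons (k : ℕ) (x : ℝ) (D : Multiset ℝ) :
    esym (k + 1) (x ::ₘ D) = esym (k + 1) D + x * esym k D := by
  simp only [esym, Multiset.powersetCard_cons, Multiset.map_add, Multiset.sum_add,
    Multiset.map_map, Function.comp_def, Multiset.prod_cons, Multiset.sum_map_mul_left]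

/-- The numerator of the localization summand at a fixed point with eigenvalue tuple `D`. -/
def numer (D : Multiset ℝ) : ℝ :=
  (-esym 1 D ^ 3 * esym 2 D + 3 * esym 1 D * esym 2 D ^ 2 + esym 1 D ^ 2 * esym 3 D
    - esym 1 D * esym 4 D) * esym 1 D ^ 3

/-- Summing `F(±x) / (±x · p)` cancels the pole at `x = 0` once `x` divides the odd part of `F`. -/
lemma div_add_div_neg {x p f g h : ℝ} (hx : x ≠ 0) (hfg : f - g = x * h) :
    f / (x * p) + g / (-x * p) = h / p := by
  rw [neg_mul, div_neg, ← sub_eq_add_neg, ← sub_div, hfg, mul_div_mul_left _ _ hx]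

/-- The polynomial in `u_k = e_k(D)` and `y` obtained by summing `numer / prod` over the two tuples
`{±y} ∪ D` and multiplying by `D.prod`; see `sum_W`. It is even in `y`. -/
def pushW (u1 u2 u3 u4 y : ℝ) : ℝ :=
  -2 * u1 ^ 7 - 6 * u1 ^ 5 * y ^ 2 + 2 * u1 ^ 5 * u2 + 8 * u1 ^ 4 * u3 - 6 * u1 ^ 3 * y ^ 4
    - 8 * u1 ^ 3 * u4 + 24 * u1 ^ 3 * u2 ^ 2 + 52 * u1 ^ 3 * u2 * y ^ 2
    + 8 * u1 ^ 2 * u3 * y ^ 2 - 2 * u1 * y ^ 6 - 8 * u1 * u4 * y ^ 2 + 24 * u1 * u2 ^ 2 * y ^ 2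
    + 10 * u1 * u2 * y ^ 4

/-- The polynomial in `u_k = e_k(D)` obtained from `pushW` by summing over the sign of the entry
`±a1` adjoined to `D`, the argument moving along as `y ± a1 / 2`; see `sum_A`. It is even in `a1`. -/
def pushA (a1 u1 u2 u3 u4 y : ℝ) : ℝ :=
  -4 * y ^ 6 - 16 * u4 * y ^ 2 + 48 * u2 ^ 2 * y ^ 2 + 20 * u2 * y ^ 4 - 24 * u1 ^ 6
    - 12 * u1 ^ 5 * y + 44 * u1 ^ 4 * y ^ 2 + 132 * u1 ^ 4 * u2 - 24 * u1 ^ 3 * y ^ 3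
    + 48 * u1 ^ 3 * u3 + 104 * u1 ^ 3 * u2 * y - 16 * u1 ^ 2 * y ^ 4 - 48 * u1 ^ 2 * u4
    + 16 * u1 ^ 2 * u3 * y + 144 * u1 ^ 2 * u2 ^ 2 + 424 * u1 ^ 2 * u2 * y ^ 2 - 12 * u1 * y ^ 5
    - 16 * u1 * u4 * y + 16 * u1 * u3 * y ^ 2 + 48 * u1 * u2 ^ 2 * y + 40 * u1 * u2 * y ^ 3
    - 125 / 16 * a1 ^ 6 - 135 / 4 * a1 ^ 4 * y ^ 2 + 205 / 4 * a1 ^ 4 * u2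
    + 43 * a1 ^ 4 * u1 ^ 2 + 141 / 4 * a1 ^ 4 * u1 * y - 27 * a1 ^ 2 * y ^ 4 - 20 * a1 ^ 2 * u4
    + 60 * a1 ^ 2 * u2 ^ 2 + 150 * a1 ^ 2 * u2 * y ^ 2 + 55 * a1 ^ 2 * u1 ^ 4
    + 234 * a1 ^ 2 * u1 ^ 3 * y + 216 * a1 ^ 2 * u1 ^ 2 * y ^ 2 + 530 * a1 ^ 2 * u1 ^ 2 * u2
    - 42 * a1 ^ 2 * u1 * y ^ 3 + 20 * a1 ^ 2 * u1 * u3 + 450 * a1 ^ 2 * u1 * u2 * y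

/-- The analogue of `pushA` after summing over the signs of two entries `±a1`, `±a2`;
see `sum_AA`. -/
def pushAA (a1 a2 u1 u2 u3 u4 y : ℝ) : ℝ :=
  -48 * y ^ 5 - 64 * u4 * y + 192 * u2 ^ 2 * y + 160 * u2 * y ^ 3 - 36 * u1 ^ 5
    + 176 * u1 ^ 4 * y + 1128 * u1 ^ 3 * y ^ 2 + 1832 * u1 ^ 3 * u2 - 128 * u1 ^ 2 * y ^ 3
    + 208 * u1 ^ 2 * u3 + 1696 * u1 ^ 2 * u2 * y - 84 * u1 * y ^ 4 - 208 * u1 * u4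
    + 64 * u1 * u3 * y + 624 * u1 * u2 ^ 2 + 2040 * u1 * u2 * y ^ 2 + 3 * a2 ^ 4 * y
    + 1239 / 4 * a2 ^ 4 * u1 - 192 * a2 ^ 2 * y ^ 3 + 1200 * a2 ^ 2 * u2 * y
    + 1734 * a2 ^ 2 * u1 ^ 3 + 2736 * a2 ^ 2 * u1 ^ 2 * y + 1038 * a2 ^ 2 * u1 * y ^ 2
    + 2850 * a2 ^ 2 * u1 * u2 + 3 * a1 ^ 4 * y + 1239 / 4 * a1 ^ 4 * u1 - 192 * a1 ^ 2 * y ^ 3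
    + 1200 * a1 ^ 2 * u2 * y + 1734 * a1 ^ 2 * u1 ^ 3 + 2736 * a1 ^ 2 * u1 ^ 2 * y
    + 1038 * a1 ^ 2 * u1 * y ^ 2 + 2850 * a1 ^ 2 * u1 * u2 + 810 * a1 ^ 2 * a2 ^ 2 * y
    + 5865 / 2 * a1 ^ 2 * a2 ^ 2 * u1

/-- The analogue of `pushA` after summing over the signs of all three entries `±a1`, `±a2`, `±a3`;
see `sum_AAA`. Its degree is `4` when `u_k` has weight `k`. -/
def pushAAA (a1 a2 a3 u1 u2 u3 u4 y : ℝ) : ℝ :=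
  -408 * y ^ 4 - 480 * u4 + 1440 * u2 ^ 2 + 4560 * u2 * y ^ 2 + 3480 * u1 ^ 4
    + 7056 * u1 ^ 3 * y + 10464 * u1 ^ 2 * y ^ 2 + 15600 * u1 ^ 2 * u2 - 528 * u1 * y ^ 3
    + 480 * u1 * u3 + 11760 * u1 * u2 * y + 1245 / 2 * a3 ^ 4 + 1500 * a3 ^ 2 * y ^ 2
    + 6900 * a3 ^ 2 * u2 + 18840 * a3 ^ 2 * u1 ^ 2 + 15420 * a3 ^ 2 * u1 * y + 1245 / 2 * a2 ^ 4
    + 1500 * a2 ^ 2 * y ^ 2 + 6900 * a2 ^ 2 * u2 + 18840 * a2 ^ 2 * u1 ^ 2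
    + 15420 * a2 ^ 2 * u1 * y + 6675 * a2 ^ 2 * a3 ^ 2 + 1245 / 2 * a1 ^ 4
    + 1500 * a1 ^ 2 * y ^ 2 + 6900 * a1 ^ 2 * u2 + 18840 * a1 ^ 2 * u1 ^ 2
    + 15420 * a1 ^ 2 * u1 * y + 6675 * a1 ^ 2 * a3 ^ 2 + 6675 * a1 ^ 2 * a2 ^ 2

lemma sum_W (D : Multiset ℝ) (y : ℝ) (hy : y ≠ 0) :
    numer (y ::ₘ D) / (y ::ₘ D).prod + numer (-y ::ₘ D) / (-y ::ₘ D).prod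
      = pushW (esym 1 D) (esym 2 D) (esym 3 D) (esym 4 D) y / D.prod := by
  rw [Multiset.prod_cons, Multiset.prod_cons]
  refine div_add_div_neg hy ?_
  simp only [numer, pushW, esym_cons _ _ D, esym_zero]
  ring

lemma sum_A (D : Multiset ℝ) (a z : ℝ) (ha : a ≠ 0) :
    pushW (esym 1 (a ::ₘ D)) (esym 2 (a ::ₘ D)) (esym 3 (a ::ₘ D)) (esym 4 (a ::ₘ D)) (z + a / 2)
        / (a ::ₘ D).prod
      + pushW (esym 1 (-a ::ₘ D)) (esym 2 (-a ::ₘ D)) (esym 3 (-a ::ₘ D)) (esym 4 (-a ::ₘ D))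
        (z - a / 2) / (-a ::ₘ D).prod
      = pushA a (esym 1 D) (esym 2 D) (esym 3 D) (esym 4 D) z / D.prod := by
  rw [Multiset.prod_cons, Multiset.prod_cons]
  refine div_add_div_neg ha ?_
  simp only [pushW, pushA, esym_cons _ _ D, esym_zero]
  ring

lemma sum_AA (D : Multiset ℝ) (a' a z : ℝ) (ha : a ≠ 0) :
    pushA a' (esym 1 (a ::ₘ D)) (esym 2 (a ::ₘ D)) (esym 3 (a ::ₘ D)) (esym 4 (a ::ₘ D))
        (z + a / 2) / (a ::ₘ D).prod
      + pushA a' (esym 1 (-a ::ₘ D)) (esym 2 (-a ::ₘ D)) (esym 3 (-a ::ₘ D)) (esym 4 (-a ::ₘ D))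
        (z - a / 2) / (-a ::ₘ D).prod
      = pushAA a' a (esym 1 D) (esym 2 D) (esym 3 D) (esym 4 D) z / D.prod := by
  rw [Multiset.prod_cons, Multiset.prod_cons]
  refine div_add_div_neg ha ?_
  simp only [pushA, pushAA, esym_cons _ _ D, esym_zero]
  ring

lemma sum_AAA (D : Multiset ℝ) (a'' a' a z : ℝ) (ha : a ≠ 0) :
    pushAA a'' a' (esym 1 (a ::ₘ D)) (esym 2 (a ::ₘ D)) (esym 3 (a ::ₘ D)) (esym 4 (a ::ₘ D))
        (z + a / 2) / (a ::ₘ D).prod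
      + pushAA a'' a' (esym 1 (-a ::ₘ D)) (esym 2 (-a ::ₘ D)) (esym 3 (-a ::ₘ D))
        (esym 4 (-a ::ₘ D)) (z - a / 2) / (-a ::ₘ D).prod
      = pushAAA a'' a' a (esym 1 D) (esym 2 D) (esym 3 D) (esym 4 D) z / D.prod := by
  rw [Multiset.prod_cons, Multiset.prod_cons]
  refine div_add_div_neg ha ?_
  simp only [pushAA, pushAAA, esym_cons _ _ D, esym_zero]
  ring

lemma sum_bool_cube (f : (Fin 3 → Bool) → ℝ) :
    ∑ ε, f ε = ∑ r : Bool, ∑ q : Bool, ∑ p : Bool, f ![p, q, r] := by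
  have h : (univ : Finset (Fin 3 → Bool)) =
      {![true, true, true], ![false, true, true], ![true, false, true], ![false, false, true],
       ![true, true, false], ![false, true, false], ![true, false, false],
       ![false, false, false]} := by decide
  rw [h]
  repeat rw [sum_insert (by decide)]
  rw [sum_singleton]
  simp only [Fintype.sum_bool]
  ring

/-- The tuple of differences `b_k - b_j`, `k ≠ j`: the part of `tup` that depends only on `j`. -/
def baseTup (b : Fin 4 → ℝ) (j : Fin 4) : Multiset ℝ :=
  (Finset.univ.erase j).val.map (fun k => b k - b j)

/-- In terms of the centred value `z = c + 2 b_j - (a_1 + a_2 + a_3) / 2`, the last entry of the tuple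
is `±(z + ∑ ε_i a_i / 2)`, so a change of `ε_i` is the reflection `a_i ↦ -a_i`. -/
lemma tup_eq (a : Fin 3 → ℝ) (b : Fin 4 → ℝ) (c : ℝ) (p q r : Bool) (j : Fin 4) (δ : Bool) :
    tup a b c ![p, q, r] j δ =
      sgn δ * (c + 2 * b j - (a 0 + a 1 + a 2) / 2
          + sgn r * a 2 / 2 + sgn q * a 1 / 2 + sgn p * a 0 / 2)
        ::ₘ sgn p * a 0 ::ₘ sgn q * a 1 ::ₘ sgn r * a 2 ::ₘ baseTup b j := by
  have hy : c - (∑ i ∈ Finset.univ.filter (fun i => ![p, q, r] i = false), a i) + 2 * b j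
      = c + 2 * b j - (a 0 + a 1 + a 2) / 2
          + sgn r * a 2 / 2 + sgn q * a 1 / 2 + sgn p * a 0 / 2 := by
    rw [sum_filter, Fin.sum_univ_three]
    cases p <;> cases q <;> cases r <;> simp [sgn] <;> ring
  unfold tup
  rw [hy, add_comm, Multiset.singleton_add]
  rfl

/-- The sum over the sixteen fixed points lying above the `j`-th fixed point of the base. -/
lemma sum_fiber (a : Fin 3 → ℝ) (b : Fin 4 → ℝ) (c : ℝ) (j : Fin 4)
    (hgen : ∀ (ε : Fin 3 → Bool) (δ : Bool), ∀ x ∈ tup a b c ε j δ, x ≠ 0) :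
    ∑ ε : Fin 3 → Bool, ∑ δ : Bool, numer (tup a b c ε j δ) / (tup a b c ε j δ).prod
      = pushAAA (a 0) (a 1) (a 2) (esym 1 (baseTup b j)) (esym 2 (baseTup b j))
          (esym 3 (baseTup b j)) (esym 4 (baseTup b j))
          (c + 2 * b j - (a 0 + a 1 + a 2) / 2) / (baseTup b j).prod := by
  have hW (p q r : Bool) := hgen ![p, q, r] true
  simp only [tup_eq, Multiset.mem_cons, forall_eq_or_imp, sgn, if_true, one_mul] at hW
  obtain ⟨-, h0, h1, h2, -⟩ := hW true true true
  simp only [if_true, one_mul] at h0 h1 h2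
  replace hW (p q r : Bool) := (hW p q r).1
  rw [sum_bool_cube]
  have hδ (p q r : Bool) := sum_W
    (sgn p * a 0 ::ₘ sgn q * a 1 ::ₘ sgn r * a 2 ::ₘ baseTup b j) _ (hW p q r)
  rw [← sum_AAA _ _ _ _ _ h2, ← sum_AA _ _ _ _ h1, ← sum_AA _ _ _ _ h1, ← sum_A _ _ _ h0,
    ← sum_A _ _ _ h0, ← sum_A _ _ _ h0, ← sum_A _ _ _ h0]
  simp only [Fintype.sum_bool, tup_eq]
  have e1 : sgn true = 1 := rfl
  have e2 : sgn false = -1 := rfl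
  have h111 := hδ true true true
  have h011 := hδ false true true
  have h101 := hδ true false true
  have h001 := hδ false false true
  have h110 := hδ true true false
  have h010 := hδ false true false
  have h100 := hδ true false false
  have h000 := hδ false false false
  simp only [e1, e2, if_true, if_false, one_mul, neg_one_mul, Bool.false_eq_true, neg_div,
    ← sub_eq_add_neg] at h111 h011 h101 h001 h110 h010 h100 h000 ⊢
  rw [h111, h011, h101, h001, h110, h010, h100, h000]

/-- Lagrange interpolation at four nodes: `∑_j b_j ^ n / ∏_{k ≠ j} (b_k - b_j)` vanishes for `n ≤ 2`,
is `-1` for `n = 3` and `-∑ b_j` for `n = 4`. -/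
lemma sum_base (q0 q1 q2 q3 q4 b0 b1 b2 b3 : ℝ) (h01 : b1 - b0 ≠ 0) (h02 : b2 - b0 ≠ 0)
    (h03 : b3 - b0 ≠ 0) (h12 : b2 - b1 ≠ 0) (h13 : b3 - b1 ≠ 0) (h23 : b3 - b2 ≠ 0) :
    (q0 + q1 * b0 + q2 * b0 ^ 2 + q3 * b0 ^ 3 + q4 * b0 ^ 4) / ((b1 - b0) * (b2 - b0) * (b3 - b0))
    + (q0 + q1 * b1 + q2 * b1 ^ 2 + q3 * b1 ^ 3 + q4 * b1 ^ 4)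
        / ((b0 - b1) * (b2 - b1) * (b3 - b1))
    + (q0 + q1 * b2 + q2 * b2 ^ 2 + q3 * b2 ^ 3 + q4 * b2 ^ 4)
        / ((b0 - b2) * (b1 - b2) * (b3 - b2))
    + (q0 + q1 * b3 + q2 * b3 ^ 2 + q3 * b3 ^ 3 + q4 * b3 ^ 4)
        / ((b0 - b3) * (b1 - b3) * (b2 - b3))
    = -q3 - q4 * (b0 + b1 + b2 + b3) := by
  rw [← neg_sub b1 b0, ← neg_sub b2 b0, ← neg_sub b3 b0, ← neg_sub b2 b1, ← neg_sub b3 b1,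
    ← neg_sub b3 b2]
  field_simp
  ring

/-- Coefficient of `x ^ 0` in the expansion of `pushAAA` at the fixed point `x = b_j`, where `s_k` is the
`k`-th elementary symmetric polynomial of the four numbers `b_k` and `y = m + 2 x`; see `pushAAA_eq`. -/
def coeff0 (a1 a2 a3 s1 s2 s3 m : ℝ) : ℝ :=
  1440 * s2 ^ 2 + 3480 * s1 ^ 4 + 15600 * s1 ^ 2 * s2 + 480 * s1 * s3 - 408 * m ^ 4
    - 528 * m ^ 3 * s1 + 4560 * m ^ 2 * s2 + 10464 * m ^ 2 * s1 ^ 2 + 7056 * m * s1 ^ 3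
    + 11760 * m * s1 * s2 + 1245 / 2 * a3 ^ 4 + 6900 * a3 ^ 2 * s2 + 18840 * a3 ^ 2 * s1 ^ 2
    + 1500 * a3 ^ 2 * m ^ 2 + 15420 * a3 ^ 2 * m * s1 + 1245 / 2 * a2 ^ 4 + 6900 * a2 ^ 2 * s2
    + 18840 * a2 ^ 2 * s1 ^ 2 + 1500 * a2 ^ 2 * m ^ 2 + 15420 * a2 ^ 2 * m * s1
    + 6675 * a2 ^ 2 * a3 ^ 2 + 1245 / 2 * a1 ^ 4 + 6900 * a1 ^ 2 * s2 + 18840 * a1 ^ 2 * s1 ^ 2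
    + 1500 * a1 ^ 2 * m ^ 2 + 15420 * a1 ^ 2 * m * s1 + 6675 * a1 ^ 2 * a3 ^ 2
    + 6675 * a1 ^ 2 * a2 ^ 2

/-- Coefficient of `x ^ 1` in the expansion of `pushAAA`; see `coeff0`. -/
def coeff1 (a1 a2 a3 s1 s2 s3 m : ℝ) : ℝ :=
  -1920 * s3 - 88368 * s1 ^ 3 - 110880 * s1 * s2 - 1152 * m ^ 3 - 100560 * m ^ 2 * s1
    - 28800 * m * s2 - 78096 * m * s1 ^ 2 - 140580 * a3 ^ 2 * s1 - 55680 * a3 ^ 2 * m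
    - 140580 * a2 ^ 2 * s1 - 55680 * a2 ^ 2 * m - 140580 * a1 ^ 2 * s1 - 55680 * a1 ^ 2 * m

/-- Coefficient of `x ^ 2` in the expansion of `pushAAA`; see `coeff0`. -/
def coeff2 (a1 a2 a3 s1 s2 m : ℝ) : ℝ :=
  194880 * s2 + 618432 * s1 ^ 2 + 197664 * m ^ 2 + 154464 * m * s1 + 225480 * a3 ^ 2
    + 225480 * a2 ^ 2 + 225480 * a1 ^ 2

/-- Since the factor `k = j` of `∏_k (1 + t (b_k - b_j))` is `1`, the elementary symmetric polynomials
of the differences are polynomials in `x = b_j` whose coefficients are symmetric in the four numbers `b_k`.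
Hence the contribution of the base fixed point `x` is a quartic in `x` with coefficients
independent of that point, over `∏ (b_k - x)`. -/
lemma pushAAA_eq (a1 a2 a3 m x y z w s1 s2 s3 : ℝ) (h1 : s1 = x + y + z + w)
    (h2 : s2 = x * y + x * z + x * w + y * z + y * w + z * w)
    (h3 : s3 = x * y * z + x * y * w + x * z * w + y * z * w) (D : Multiset ℝ)
    (hD : D = {y - x, z - x, w - x}) :
    pushAAA a1 a2 a3 (esym 1 D) (esym 2 D) (esym 3 D) (esym 4 D) (m + 2 * x) / D.prod
      = (coeff0 a1 a2 a3 s1 s2 s3 m + coeff1 a1 a2 a3 s1 s2 s3 m * x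
          + coeff2 a1 a2 a3 s1 s2 m * x ^ 2 + (57600 * m - 1741056 * s1) * x ^ 3
          + 1769856 * x ^ 4) / ((y - x) * (z - x) * (w - x)) := by
  have h (k : ℕ) : esym (k + 1) (0 : Multiset ℝ) = 0 := by
    simp [esym, Multiset.powersetCard_zero_right]
  replace hD : D = (y - x) ::ₘ (z - x) ::ₘ (w - x) ::ₘ 0 := hD
  rw [hD]
  congr 1
  · simp only [esym_cons 0, esym_cons 1, esym_cons 2, esym_cons 3, esym_zero, h 0, h 1, h 2, h 3,
      pushAAA, coeff0, coeff1, coeff2, h1, h2, h3]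
    ring
  · simp [mul_assoc]

theorem futaki_Td5 (a : Fin 3 → ℝ) (b : Fin 4 → ℝ) (c : ℝ)
    (hb4 : b 3 = 0)
    (hgen : ∀ (ε : Fin 3 → Bool) (j : Fin 4) (δ : Bool),
      ∀ x ∈ tup a b c ε j δ, x ≠ 0) :
    ∑ ε : Fin 3 → Bool, ∑ j : Fin 4, ∑ δ : Bool,
      (let E : ℕ → ℝ := fun k => esym k (tup a b c ε j δ);
       ((-E 1 ^ 3 * E 2 + 3 * E 1 * E 2 ^ 2 + E 1 ^ 2 * E 3 - E 1 * E 4) * E 1 ^ 3) / (tup a b c ε j δ).prod)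
    = 28800 * (a 0 + a 1 + a 2 - b 0 - b 1 - b 2 - 2 * c) := by
  change ∑ ε : Fin 3 → Bool, ∑ j : Fin 4, ∑ δ : Bool,
    numer (tup a b c ε j δ) / (tup a b c ε j δ).prod = _
  rw [sum_comm]
  simp only [sum_fiber a b c _ fun ε δ => hgen ε _ δ]
  have hne (j k : Fin 4) (hjk : k ≠ j) : b k - b j ≠ 0 := by
    refine hgen ![true, true, true] j true _ ?_
    simp only [tup_eq, Multiset.mem_cons, baseTup, Multiset.mem_map]
    exact .inr (.inr (.inr (.inr ⟨k, Finset.mem_erase.2 ⟨hjk, mem_univ k⟩, rfl⟩)))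
  obtain ⟨m, hm⟩ : ∃ m, m = c - (a 0 + a 1 + a 2) / 2 := ⟨_, rfl⟩
  have hy (j : Fin 4) : c + 2 * b j - (a 0 + a 1 + a 2) / 2 = m + 2 * b j := by rw [hm]; ring
  have key := fun x y z w h1 h2 h3 => pushAAA_eq (a 0) (a 1) (a 2) m x y z w
    (b 0 + b 1 + b 2 + b 3)
    (b 0 * b 1 + b 0 * b 2 + b 0 * b 3 + b 1 * b 2 + b 1 * b 3 + b 2 * b 3)
    (b 0 * b 1 * b 2 + b 0 * b 1 * b 3 + b 0 * b 2 * b 3 + b 1 * b 2 * b 3) h1 h2 h3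
  simp only [hy, Fin.sum_univ_four]
  rw [key (b 0) (b 1) (b 2) (b 3) (by ring) (by ring) (by ring) (baseTup b 0) rfl,
    key (b 1) (b 0) (b 2) (b 3) (by ring) (by ring) (by ring) (baseTup b 1) rfl,
    key (b 2) (b 0) (b 1) (b 3) (by ring) (by ring) (by ring) (baseTup b 2) rfl,
    key (b 3) (b 0) (b 1) (b 2) (by ring) (by ring) (by ring) (baseTup b 3) rfl,
    sum_base _ _ _ _ _ _ _ _ _ (hne 0 1 (by decide)) (hne 0 2 (by decide)) (hne 0 3 (by decide))
      (hne 1 2 (by decide)) (hne 1 3 (by decide)) (hne 2 3 (by decide)), hm, hb4]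
  ring
end
end

section
/- The polytope P := {w ∈ ℝ^7 : ⟨v_j, w⟩ ≥ −1 for all j = 1,...,12} has exactly 64 extreme points. -/
/-!
Write `h = w 6`. The inequalities defining `P` say that `-1 ≤ h ≤ 1`, that `w 0`, `w 1`, `w 2` lie
in the segment `[-1, 1 - h]` of length `2 - h > 0`, and that `(w 3, w 4, w 5)` lies in the simplex
`{w 3, w 4, w 5 ≥ -1, w 3 + w 4 + w 5 ≤ 1 + 2 h}` of edge length `4 + 2 h > 0` (`mem_P_iff`). So `P`
is a bundle over the segment `[-1, 1]` whose fibre is a product of three segments and a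
tetrahedron, and its vertices are the `2 * 2 ^ 3 * 4 = 64` points `vert`: an end of the base,
an end of each of the three segments, and a vertex of the tetrahedron.

Each `vert` is extreme because a tight inequality at a point is tight at both ends of any segment
of `P` around it, and the tight inequalities determine the point (`vert_mem_extremePoints`).
Conversely an extreme point `w` admits no nonzero `d` with `w + d, w - d ∈ P` (`eq_zero_of_extreme`);
suitable choices of `d` force `h = ±1` (`base_of_extreme`), endpoints of the segments
(`segment_of_extreme`), and at most one slack inequality of the simplex (`simplex_of_extreme`).
-/

noncomputable section

/-- The twelve vertices of the Fano polytope of the Nill–Paffenholz toric Fano 7-fold. -/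
def vs : Fin 12 → Fin 7 → ℝ :=
  ![![1,0,0,0,0,0,0], ![0,1,0,0,0,0,0], ![0,0,1,0,0,0,0],
    ![0,0,-1,0,0,0,-1], ![0,-1,0,0,0,0,-1], ![-1,0,0,0,0,0,-1],
    ![0,0,0,1,0,0,0], ![0,0,0,0,1,0,0], ![0,0,0,0,0,1,0],
    ![0,0,0,-1,-1,-1,2], ![0,0,0,0,0,0,1], ![0,0,0,0,0,0,-1]]

/-- The polar dual polytope (the Delzant polytope of the anticanonically polarized
Nill–Paffenholz manifold): `P = {w : ⟨vⱼ, w⟩ ≥ -1 for all j}`. -/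
def P : Set (Fin 7 → ℝ) := {w | ∀ j : Fin 12, -1 ≤ ∑ i : Fin 7, vs j i * w i}

/-! ### The inequalities of `P` -/

lemma mem_P_iff (w : Fin 7 → ℝ) : w ∈ P ↔
    (-1 ≤ w 6 ∧ w 6 ≤ 1) ∧
    ((-1 ≤ w 0 ∧ w 0 ≤ 1 - w 6) ∧ (-1 ≤ w 1 ∧ w 1 ≤ 1 - w 6) ∧ (-1 ≤ w 2 ∧ w 2 ≤ 1 - w 6)) ∧
    (-1 ≤ w 3 ∧ -1 ≤ w 4 ∧ -1 ≤ w 5 ∧ w 3 + w 4 + w 5 ≤ 1 + 2 * w 6) := by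
  simp only [P, Set.mem_ofPred_eq, Fin.forall_fin_succ, Fin.sum_univ_succ, vs]
  simp [Fin.succ]
  constructor
  · rintro ⟨h0, h1, h2, h3, h4, h5, h6, h7, h8, h9, h10, h11⟩
    refine ⟨⟨?_, ?_⟩, ⟨⟨?_, ?_⟩, ⟨?_, ?_⟩, ?_, ?_⟩, ?_, ?_, ?_, ?_⟩ <;> linarith
  · rintro ⟨⟨h0, h1⟩, ⟨⟨h2, h3⟩, ⟨h4, h5⟩, h6, h7⟩, h8, h9, h10, h11⟩
    refine ⟨?_, ?_, ?_, ?_, ?_, ?_, ?_, ?_, ?_, ?_, ?_, ?_⟩ <;> linarith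

/-! ### The 64 points -/

/-- The end of the base segment `[-1, 1]` selected by `e`. -/
def base (e : Bool) : ℝ := if e then 1 else -1

/-- The vertex of `P` over the end `base e` of the base: `s` selects an end of each of the three
segments, and `k` a vertex of the tetrahedron, with `k = 3` standing for `(-1, -1, -1)`. -/
def vert (p : Bool × (Fin 3 → Bool) × Fin 4) : Fin 7 → ℝ :=
  ![if p.2.1 0 then 1 - base p.1 else -1,
    if p.2.1 1 then 1 - base p.1 else -1,
    if p.2.1 2 then 1 - base p.1 else -1,
    if p.2.2 = 0 then 3 + 2 * base p.1 else -1,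
    if p.2.2 = 1 then 3 + 2 * base p.1 else -1,
    if p.2.2 = 2 then 3 + 2 * base p.1 else -1,
    base p.1]

lemma base_bounds (e : Bool) : -1 ≤ base e ∧ base e ≤ 1 := by
  cases e <;> norm_num [base]

lemma vert_mem_P (p : Bool × (Fin 3 → Bool) × Fin 4) : vert p ∈ P := by
  obtain ⟨e, s, k⟩ := p
  obtain ⟨h1, h2⟩ := base_bounds e
  rw [mem_P_iff]
  simp only [vert, Matrix.cons_val]
  refine ⟨⟨h1, h2⟩, ⟨?_, ?_, ?_⟩, ?_⟩
  · split_ifs <;> constructor <;> linarith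
  · split_ifs <;> constructor <;> linarith
  · split_ifs <;> constructor <;> linarith
  · fin_cases k <;> simp <;> (try constructor) <;> linarith

lemma vert_injective : Function.Injective vert := by
  rintro ⟨e, s, k⟩ ⟨e', s', k'⟩ H
  have he : e = e' := by
    have := congrFun H 6
    simp only [vert, Matrix.cons_val, base] at this
    cases e <;> cases e' <;> first | rfl | (norm_num at this)
  subst he
  obtain ⟨h1, h2⟩ := base_bounds e
  have key : ∀ a b : Bool, ((if a then 1 - base e else -1) = if b then 1 - base e else -1) →
      a = b := by
    intro a b h
    cases a <;> cases b <;> simp at h ⊢ <;> linarith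
  have hs : s = s' := by
    funext i
    fin_cases i
    · have h := congrFun H 0
      simp only [vert, Matrix.cons_val] at h
      exact key _ _ h
    · have h := congrFun H 1
      simp only [vert, Matrix.cons_val] at h
      exact key _ _ h
    · have h := congrFun H 2
      simp only [vert, Matrix.cons_val] at h
      exact key _ _ h
  subst hs
  have hk : k = k' := by
    have h3 := congrFun H 3
    have h4 := congrFun H 4
    have h5 := congrFun H 5
    simp only [vert, Matrix.cons_val] at h3 h4 h5
    fin_cases k <;> fin_cases k' <;> simp at h3 h4 h5 ⊢ <;> linarith
  rw [hk]

/-! ### The 64 points are extreme -/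

/-- A lower bound that is attained in the interior of a segment is attained at its first end. -/
lemma eq_of_tight {a b x y c : ℝ} (ha : 0 < a) (hb : 0 < b) (hab : a + b = 1)
    (h : a * x + b * y = c) (hx : c ≤ x) (hy : c ≤ y) : x = c := by
  have h1 : a * (x - c) + b * (y - c) = 0 := by linear_combination h - c * hab
  have h2 := mul_nonneg ha.le (sub_nonneg.2 hx)
  have h3 := mul_nonneg hb.le (sub_nonneg.2 hy)
  have h4 : a * (x - c) = 0 := by linarith
  rcases mul_eq_zero.1 h4 with h | h <;> linarith

lemma vert_mem_extremePoints (p : Bool × (Fin 3 → Bool) × Fin 4) :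
    vert p ∈ Set.extremePoints ℝ P := by
  rw [mem_extremePoints_iff_left]
  refine ⟨vert_mem_P p, ?_⟩
  rintro x hx y hy ⟨a, b, ha, hb, hab, hv⟩
  have hc : ∀ i, a * x i + b * y i = vert p i := fun i => by
    simpa using congrFun hv i
  obtain ⟨e, s, k⟩ := p
  rw [mem_P_iff] at hx hy
  obtain ⟨⟨hx6, hx6'⟩, ⟨hx0, hx1, hx2⟩, hx3, hx4, hx5, hxs⟩ := hx
  obtain ⟨⟨hy6, hy6'⟩, ⟨hy0, hy1, hy2⟩, hy3, hy4, hy5, hys⟩ := hy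
  have hba : b + a = 1 := by linarith
  have c0 := hc 0
  have c1 := hc 1
  have c2 := hc 2
  have c3 := hc 3
  have c4 := hc 4
  have c5 := hc 5
  have c6 := hc 6
  simp only [vert, Matrix.cons_val] at c0 c1 c2 c3 c4 c5 c6
  have tight : ∀ u v c : ℝ, a * u + b * v = c → c ≤ u → c ≤ v → u = c :=
    fun u v c => eq_of_tight ha hb hab
  have e6 : x 6 = base e ∧ y 6 = base e := by
    cases e <;> simp only [base] at c6 ⊢ <;> norm_num at c6 ⊢
    · exact ⟨eq_of_tight ha hb hab c6 hx6 hy6,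
        eq_of_tight hb ha hba (by linarith) hy6 hx6⟩
    · have h1 := eq_of_tight (x := -x 6) (y := -y 6) (c := -1) ha hb hab
        (by linarith) (by linarith) (by linarith)
      have h2 := eq_of_tight (x := -y 6) (y := -x 6) (c := -1) hb ha hba
        (by linarith) (by linarith) (by linarith)
      constructor <;> linarith
  obtain ⟨ex6, ey6⟩ := e6
  rw [ex6] at hx0 hx1 hx2 hxs
  rw [ey6] at hy0 hy1 hy2 hys
  have seg : ∀ (t : Bool) (u v : ℝ), a * u + b * v = (if t then 1 - base e else -1) →
      (-1 ≤ u ∧ u ≤ 1 - base e) → (-1 ≤ v ∧ v ≤ 1 - base e) →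
      u = if t then 1 - base e else -1 := by
    rintro t u v h ⟨hu, hu'⟩ ⟨hv, hv'⟩
    cases t <;> simp at h ⊢
    · exact tight _ _ _ h hu hv
    · have := tight (-u) (-v) (-(1 - base e)) (by linarith) (by linarith) (by linarith)
      linarith
  have e0 := seg _ _ _ c0 hx0 hy0
  have e1 := seg _ _ _ c1 hx1 hy1
  have e2 := seg _ _ _ c2 hx2 hy2
  -- When the vertex of the tetrahedron is not `(-1, -1, -1)`, its last facet is tight too.
  have esum : k ≠ 3 → x 3 + x 4 + x 5 = 1 + 2 * base e := by
    intro hk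
    have := tight (-(x 3 + x 4 + x 5)) (-(y 3 + y 4 + y 5)) (-(1 + 2 * base e))
      (by fin_cases k <;> simp at c3 c4 c5 hk ⊢ <;> linarith) (by linarith) (by linarith)
    linarith
  have simplex : x 3 = (if k = 0 then 3 + 2 * base e else -1) ∧
      x 4 = (if k = 1 then 3 + 2 * base e else -1) ∧
      x 5 = (if k = 2 then 3 + 2 * base e else -1) := by
    have f3 : k ≠ 0 → x 3 = -1 := fun hk => tight _ _ _ (by simpa [hk] using c3) hx3 hy3
    have f4 : k ≠ 1 → x 4 = -1 := fun hk => tight _ _ _ (by simpa [hk] using c4) hx4 hy4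
    have f5 : k ≠ 2 → x 5 = -1 := fun hk => tight _ _ _ (by simpa [hk] using c5) hx5 hy5
    clear c3 c4 c5
    fin_cases k <;> simp at f3 f4 f5 esum ⊢ <;> refine ⟨?_, ?_, ?_⟩ <;> linarith
  obtain ⟨e3, e4, e5⟩ := simplex
  funext i
  fin_cases i <;> simp only [vert] <;> simpa

/-! ### Every extreme point is one of the 64 -/

/-- An extreme point is not the midpoint of a nondegenerate segment in the set. -/
lemma eq_zero_of_extreme {w d : Fin 7 → ℝ} (hw : w ∈ Set.extremePoints ℝ P)
    (h1 : w + d ∈ P) (h2 : w - d ∈ P) : d = 0 := by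
  rw [mem_extremePoints_iff_left] at hw
  have := hw.2 _ h1 _ h2 ⟨1 / 2, 1 / 2, by norm_num, by norm_num, by norm_num, by
    funext i
    simp
    ring⟩
  simpa using this

/-- Over the interior of the base, an extreme point could be moved along the base while keeping its
barycentric coordinates in the fibre. -/
lemma base_of_extreme {w : Fin 7 → ℝ} (hw : w ∈ Set.extremePoints ℝ P) :
    w 6 = 1 ∨ w 6 = -1 := by
  by_contra! hne
  obtain ⟨⟨h6, h6'⟩, ⟨⟨h0, h0'⟩, ⟨h1, h1'⟩, h2, h2'⟩, h3, h4, h5, hs⟩ := (mem_P_iff w).1 hw.1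
  have l1 : w 6 < 1 := lt_of_le_of_ne h6' hne.1
  have l2 : -1 < w 6 := lt_of_le_of_ne h6 (Ne.symm hne.2)
  obtain ⟨ε, hε, hε1, hε2⟩ : ∃ ε : ℝ, 0 < ε ∧ ε ≤ 1 - w 6 ∧ ε ≤ 1 + w 6 :=
    ⟨min (1 - w 6) (1 + w 6), lt_min (by linarith) (by linarith), min_le_left _ _, min_le_right _ _⟩
  have pos1 : 0 < 2 - w 6 := by linarith
  have pos2 : 0 < 4 + 2 * w 6 := by linarith
  -- The parameters `t` below are fixed while the base coordinate moves.
  have seg : ∀ u, -1 ≤ u → u ≤ 1 - w 6 → ∃ t : ℝ, 0 ≤ t ∧ t ≤ 1 ∧ u = -1 + t * (2 - w 6) := by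
    intro u hu hu'
    refine ⟨(u + 1) / (2 - w 6), div_nonneg (by linarith) pos1.le,
      (div_le_one pos1).2 (by linarith), ?_⟩
    field_simp
    ring
  have smp : ∀ u, -1 ≤ u → ∃ t : ℝ, 0 ≤ t ∧ u = -1 + t * (4 + 2 * w 6) := by
    intro u hu
    refine ⟨(u + 1) / (4 + 2 * w 6), div_nonneg (by linarith) pos2.le, ?_⟩
    field_simp
    ring
  obtain ⟨t0, p0, q0, r0⟩ := seg _ h0 h0'
  obtain ⟨t1, p1, q1, r1⟩ := seg _ h1 h1'
  obtain ⟨t2, p2, q2, r2⟩ := seg _ h2 h2'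
  obtain ⟨t3, p3, r3⟩ := smp _ h3
  obtain ⟨t4, p4, r4⟩ := smp _ h4
  obtain ⟨t5, p5, r5⟩ := smp _ h5
  have qs : t3 + t4 + t5 ≤ 1 := by
    by_contra! hlt
    have := mul_lt_mul_of_pos_right hlt pos2
    linarith
  have mem : ∀ δ : ℝ, -ε ≤ δ → δ ≤ ε →
      w + δ • ![-t0, -t1, -t2, 2 * t3, 2 * t4, 2 * t5, 1] ∈ P := by
    intro δ d1 d2
    have m1 : 0 ≤ 2 - (w 6 + δ) := by linarith
    have m2 : 0 ≤ 4 + 2 * (w 6 + δ) := by linarith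
    rw [mem_P_iff]
    simp only [Pi.add_apply, Pi.smul_apply, smul_eq_mul, Matrix.cons_val]
    have n0 := mul_nonneg p0 m1
    have n1 := mul_nonneg p1 m1
    have n2 := mul_nonneg p2 m1
    have n0' := mul_nonneg (sub_nonneg.2 q0) m1
    have n1' := mul_nonneg (sub_nonneg.2 q1) m1
    have n2' := mul_nonneg (sub_nonneg.2 q2) m1
    have n3 := mul_nonneg p3 m2
    have n4 := mul_nonneg p4 m2
    have n5 := mul_nonneg p5 m2
    have ns := mul_nonneg (sub_nonneg.2 qs) m2
    refine ⟨⟨?_, ?_⟩, ⟨⟨?_, ?_⟩, ⟨?_, ?_⟩, ?_, ?_⟩, ?_, ?_, ?_, ?_⟩ <;> linarith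
  have hd := eq_zero_of_extreme hw (mem ε (by linarith) le_rfl) (by
    have := mem (-ε) le_rfl (by linarith)
    rwa [neg_smul, ← sub_eq_add_neg] at this)
  have := congrFun hd 6
  simp at this
  linarith

lemma segment_of_extreme {w : Fin 7 → ℝ} (hw : w ∈ Set.extremePoints ℝ P) (i : Fin 7)
    (hi : i = 0 ∨ i = 1 ∨ i = 2) : w i = 1 - w 6 ∨ w i = -1 := by
  by_contra! hne
  have hP := (mem_P_iff w).1 hw.1
  have hb : -1 ≤ w i ∧ w i ≤ 1 - w 6 := by
    rcases hi with rfl | rfl | rfl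
    exacts [hP.2.1.1, hP.2.1.2.1, hP.2.1.2.2]
  have l1 : w i < 1 - w 6 := lt_of_le_of_ne hb.2 hne.1
  have l2 : -1 < w i := lt_of_le_of_ne hb.1 (Ne.symm hne.2)
  obtain ⟨ε, hε, hε1, hε2⟩ : ∃ ε : ℝ, 0 < ε ∧ ε ≤ 1 - w 6 - w i ∧ ε ≤ w i + 1 :=
    ⟨min (1 - w 6 - w i) (w i + 1), lt_min (by linarith) (by linarith),
      min_le_left _ _, min_le_right _ _⟩
  obtain ⟨⟨h6, h6'⟩, ⟨⟨h0, h0'⟩, ⟨h1, h1'⟩, h2, h2'⟩, h3, h4, h5, hs⟩ := hP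
  have hd : Pi.single i ε = (0 : Fin 7 → ℝ) := by
    apply eq_zero_of_extreme hw <;> rw [mem_P_iff] <;>
      rcases hi with rfl | rfl | rfl <;>
      simp <;>
      refine ⟨⟨?_, ?_⟩, ⟨⟨?_, ?_⟩, ⟨?_, ?_⟩, ?_, ?_⟩, ?_, ?_, ?_, ?_⟩ <;> linarith
  have := congrFun hd i
  simp at this
  linarith

/-- If two of the four inequalities of the tetrahedron were slack, an extreme point could be moved
parallel to the edge joining the two opposite vertices. -/
lemma simplex_of_extreme {w : Fin 7 → ℝ} (hw : w ∈ Set.extremePoints ℝ P) :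
    ∃ k : Fin 4, w 3 = (if k = 0 then 3 + 2 * w 6 else -1) ∧
      w 4 = (if k = 1 then 3 + 2 * w 6 else -1) ∧
      w 5 = (if k = 2 then 3 + 2 * w 6 else -1) := by
  obtain ⟨⟨h6, h6'⟩, ⟨⟨h0, h0'⟩, ⟨h1, h1'⟩, h2, h2'⟩, h3, h4, h5, hs⟩ := (mem_P_iff w).1 hw.1
  have move : ∀ a b c : ℝ, (|a| ≤ w 3 + 1) → (|b| ≤ w 4 + 1) → (|c| ≤ w 5 + 1) →
      (|a + b + c| ≤ 1 + 2 * w 6 - (w 3 + w 4 + w 5)) → a = 0 ∧ b = 0 ∧ c = 0 := by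
    intro a b c ha hb hc habc
    rw [abs_le] at ha hb hc habc
    have hd : ![0, 0, 0, a, b, c, 0] = (0 : Fin 7 → ℝ) := by
      apply eq_zero_of_extreme hw <;> rw [mem_P_iff] <;>
      simp only [Pi.add_apply, Pi.sub_apply, Matrix.cons_val] <;>
      refine ⟨⟨?_, ?_⟩, ⟨⟨?_, ?_⟩, ⟨?_, ?_⟩, ?_, ?_⟩, ?_, ?_, ?_, ?_⟩ <;> linarith
    exact ⟨by simpa using congrFun hd 3, by simpa using congrFun hd 4, by simpa using congrFun hd 5⟩
  -- Among any two slacks, one vanishes.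
  have pair : ∀ u v : ℝ, 0 ≤ u → 0 ≤ v →
      (∀ ε : ℝ, 0 ≤ ε → ε ≤ u → ε ≤ v → ε = 0) → u = 0 ∨ v = 0 := by
    intro u v hu hv h
    have := h (min u v) (le_min hu hv) (min_le_left _ _) (min_le_right _ _)
    rcases min_choice u v with h' | h' <;> rw [h'] at this
    exacts [Or.inl this, Or.inr this]
  have s34 := pair (w 3 + 1) (w 4 + 1) (by linarith) (by linarith) fun ε e0 e1 e2 =>
    (move ε (-ε) 0 (by simpa [abs_of_nonneg e0]) (by simpa [abs_of_nonneg e0])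
      (by simp; linarith) (by simp; linarith)).1
  have s35 := pair (w 3 + 1) (w 5 + 1) (by linarith) (by linarith) fun ε e0 e1 e2 =>
    (move ε 0 (-ε) (by simpa [abs_of_nonneg e0]) (by simp; linarith)
      (by simpa [abs_of_nonneg e0]) (by simp; linarith)).1
  have s45 := pair (w 4 + 1) (w 5 + 1) (by linarith) (by linarith) fun ε e0 e1 e2 =>
    (move 0 ε (-ε) (by simp; linarith) (by simpa [abs_of_nonneg e0])
      (by simpa [abs_of_nonneg e0]) (by simp; linarith)).2.1
  have s3 := pair (w 3 + 1) (1 + 2 * w 6 - (w 3 + w 4 + w 5)) (by linarith) (by linarith)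
    fun ε e0 e1 e2 => (move ε 0 0 (by simpa [abs_of_nonneg e0]) (by simp; linarith)
      (by simp; linarith) (by simpa [abs_of_nonneg e0])).1
  have s4 := pair (w 4 + 1) (1 + 2 * w 6 - (w 3 + w 4 + w 5)) (by linarith) (by linarith)
    fun ε e0 e1 e2 => (move 0 ε 0 (by simp; linarith) (by simpa [abs_of_nonneg e0])
      (by simp; linarith) (by simpa [abs_of_nonneg e0])).2.1
  have s5 := pair (w 5 + 1) (1 + 2 * w 6 - (w 3 + w 4 + w 5)) (by linarith) (by linarith)
    fun ε e0 e1 e2 => (move 0 0 ε (by simp; linarith) (by simp; linarith)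
      (by simpa [abs_of_nonneg e0]) (by simpa [abs_of_nonneg e0])).2.2
  by_cases n3 : w 3 + 1 = 0
  · by_cases n4 : w 4 + 1 = 0
    · by_cases n5 : w 5 + 1 = 0
      · exact ⟨3, by simp; linarith, by simp; linarith, by simp; linarith⟩
      · have := s5.resolve_left n5
        exact ⟨2, by simp; linarith, by simp; linarith, by simp; linarith⟩
    · have := s4.resolve_left n4
      have := s45.resolve_left n4
      exact ⟨1, by simp; linarith, by simp; linarith, by simp; linarith⟩
  · have := s3.resolve_left n3
    have := s34.resolve_left n3
    have := s35.resolve_left n3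
    exact ⟨0, by simp; linarith, by simp; linarith, by simp; linarith⟩

lemma extremePoints_eq_range : Set.extremePoints ℝ P = Set.range vert := by
  apply Set.Subset.antisymm
  · intro w hw
    obtain ⟨e, he⟩ : ∃ e, w 6 = base e := by
      rcases base_of_extreme hw with h | h
      exacts [⟨true, by simpa [base]⟩, ⟨false, by simpa [base]⟩]
    have seg : ∀ i : Fin 7, (i = 0 ∨ i = 1 ∨ i = 2) →
        ∃ t : Bool, w i = if t then 1 - base e else -1 := by
      intro i hi
      rcases segment_of_extreme hw i hi with h | h
      exacts [⟨true, by simp [h, he]⟩, ⟨false, by simp [h]⟩]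
    obtain ⟨t0, e0⟩ := seg 0 (by simp)
    obtain ⟨t1, e1⟩ := seg 1 (by simp)
    obtain ⟨t2, e2⟩ := seg 2 (by simp)
    obtain ⟨k, e3, e4, e5⟩ := simplex_of_extreme hw
    rw [he] at e3 e4 e5
    refine ⟨(e, ![t0, t1, t2], k), ?_⟩
    funext i
    symm
    fin_cases i <;> simp only [vert, Matrix.cons_val] <;> simpa
  · rintro _ ⟨p, rfl⟩
    exact vert_mem_extremePoints p

/-- The polar dual `P` has exactly `64` extreme points (vertices). -/
theorem P_has_64_vertices : (Set.extremePoints ℝ P).ncard = 64 := by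
  rw [extremePoints_eq_range, ← Set.image_univ, Set.ncard_image_of_injective _ vert_injective,
    Set.ncard_univ, Nat.card_eq_fintype_card]
  simp
end
end
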